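/- Let p be an odd prime, l a positive integer, q = p^l, and let F be the finite field with q elements (in Lean, GaloisField p l). Let ν ≥ 1 and r ≥ 0 be integers, let n′ be an odd positive integer not divisible by p, and set n = 2^ν·p^r·n′. Then there exists a monic polynomial h over F such that X^n + 1 = (C (h.coeff 0)⁻¹ * h.reverse) * h if and only if 2^{ν+1} does not divide p^l + 1. -/

import Mathlib

open Polynomial

namespace Polynomial

section Semiring

variable {R : Type*} [Semiring R]

theorem reverse_map_of_injective {S : Type*} [Semiring S] {f : R →+* S}
    (hf : Function.Injective f) (h : R[X]) : (h.map f).reverse = h.reverse.map f := by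
  ext n
  simp [coeff_reverse, natDegree_map_eq_of_injective hf]

theorem natTrailingDegree_eq_zero_of_coeff_zero_ne_zero {h : R[X]} (h0 : h.coeff 0 ≠ 0) :
    h.natTrailingDegree = 0 :=
  natTrailingDegree_eq_zero.2 (Or.inr h0)

theorem reverse_reverse_of_coeff_zero_ne_zero {h : R[X]} (h0 : h.coeff 0 ≠ 0) :
    h.reverse.reverse = h := by
  have hd : h.reverse.natDegree = h.natDegree := by
    rw [reverse_natDegree, natTrailingDegree_eq_zero_of_coeff_zero_ne_zero h0, Nat.sub_zero]
  ext n
  rw [coeff_reverse, coeff_reverse, hd, revAt_invol]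

end Semiring

section Field

variable {F : Type*} [Field F]

theorem reverse_pow_of_domain (h : F[X]) (k : ℕ) : (h ^ k).reverse = h.reverse ^ k := by
  induction k with
  | zero => simpa using reverse_C (1 : F)
  | succ k ih => rw [pow_succ, reverse_mul_of_domain, ih, pow_succ]

theorem rootMultiplicity_le_rootMultiplicity_inv_reverse {h : F[X]} (hne : h ≠ 0) {a : F}
    (ha : a ≠ 0) : h.rootMultiplicity a ≤ h.reverse.rootMultiplicity a⁻¹ := by
  rw [le_rootMultiplicity_iff (by simpa using hne)]
  obtain ⟨g, hg⟩ := pow_rootMultiplicity_dvd h a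
  have hX : (X - C a).reverse = C (-a) * (X - C a⁻¹) := by
    have h1 : (X - C a).reverse = 1 - C a * X := by
      have hX : (X : F[X]).reverse = 1 := by
        simpa using (reverse_mul_X (1 : F[X])).trans (by simpa using reverse_C (1 : F))
      rw [sub_eq_add_neg, ← C_neg, reverse_add_C, hX, natDegree_X, pow_one, C_neg, neg_mul,
        sub_eq_add_neg]
    rw [h1, mul_sub, ← C_mul, neg_mul, mul_inv_cancel₀ ha]
    simp
    ring
  conv_rhs => rw [hg]
  rw [reverse_mul_of_domain, reverse_pow_of_domain, hX, mul_pow]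
  exact (dvd_mul_left _ _).mul_right _

theorem rootMultiplicity_inv_reverse {h : F[X]} (h0 : h.coeff 0 ≠ 0) {a : F} (ha : a ≠ 0) :
    h.reverse.rootMultiplicity a⁻¹ = h.rootMultiplicity a := by
  have hne : h ≠ 0 := by rintro rfl; simp at h0
  refine le_antisymm ?_ (rootMultiplicity_le_rootMultiplicity_inv_reverse hne ha)
  simpa [reverse_reverse_of_coeff_zero_ne_zero h0] using
    rootMultiplicity_le_rootMultiplicity_inv_reverse (h := h.reverse) (by simpa using hne)
      (inv_ne_zero ha)

theorem rootMultiplicity_X_pow_mul_char_pow_add_one (p : ℕ) [Fact p.Prime] [CharP F p] {m : ℕ}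
    (hm : ¬ p ∣ m) (r : ℕ) {a : F} (ha : a ^ m = -1) :
    (X ^ (m * p ^ r) + 1 : F[X]).rootMultiplicity a = p ^ r := by
  classical
  have hsep : (X ^ m + 1 : F[X]).Separable := by
    simpa using separable_X_pow_sub_C' p m (-1 : F) hm (by simp)
  have hone : (X ^ m + 1 : F[X]).rootMultiplicity a = 1 :=
    le_antisymm (rootMultiplicity_le_one_of_separable hsep a)
      ((rootMultiplicity_pos hsep.ne_zero).2 (by simp [ha]))
  have hpow : (X ^ (m * p ^ r) + 1 : F[X]) = (X ^ m + 1) ^ p ^ r := by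
    rw [add_pow_char_pow, one_pow, pow_mul]
  rw [hpow, ← count_roots, roots_pow, Multiset.count_nsmul, count_roots, hone, mul_one]

/-- The monic reciprocal polynomial `h* = h(0)⁻¹ X ^ (deg h) h(X⁻¹)`. -/
noncomputable def monicReciprocal (h : F[X]) : F[X] := C (h.coeff 0)⁻¹ * h.reverse

theorem monicReciprocal_mul (f g : F[X]) :
    (f * g).monicReciprocal = f.monicReciprocal * g.monicReciprocal := by
  simp only [monicReciprocal, reverse_mul_of_domain, mul_coeff_zero, mul_inv, C_mul]
  ring

theorem Monic.coeff_zero_monicReciprocal {h : F[X]} (hm : h.Monic) :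
    h.monicReciprocal.coeff 0 = (h.coeff 0)⁻¹ := by
  simp [monicReciprocal, hm.leadingCoeff]

theorem Monic.monicReciprocal_monicReciprocal {h : F[X]} (hm : h.Monic) (h0 : h.coeff 0 ≠ 0) :
    h.monicReciprocal.monicReciprocal = h := by
  rw [monicReciprocal, hm.coeff_zero_monicReciprocal, monicReciprocal, reverse_mul_of_domain,
    reverse_C, reverse_reverse_of_coeff_zero_ne_zero h0, ← mul_assoc, ← C_mul]
  simp [h0]

theorem monic_monicReciprocal {h : F[X]} (h0 : h.coeff 0 ≠ 0) : h.monicReciprocal.Monic := by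
  rw [Monic, monicReciprocal, leadingCoeff_mul, leadingCoeff_C, reverse_leadingCoeff,
    trailingCoeff, natTrailingDegree_eq_zero_of_coeff_zero_ne_zero h0, inv_mul_cancel₀ h0]

theorem monicReciprocal_dvd_monicReciprocal {f g : F[X]} (h : f ∣ g) :
    f.monicReciprocal ∣ g.monicReciprocal := by
  obtain ⟨k, rfl⟩ := h
  exact ⟨_, monicReciprocal_mul f k⟩

theorem natDegree_monicReciprocal {h : F[X]} (h0 : h.coeff 0 ≠ 0) :
    h.monicReciprocal.natDegree = h.natDegree := by
  rw [monicReciprocal, natDegree_C_mul (inv_ne_zero h0), reverse_natDegree,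
    natTrailingDegree_eq_zero_of_coeff_zero_ne_zero h0, Nat.sub_zero]

theorem Monic.irreducible_monicReciprocal {f : F[X]} (hm : f.Monic) (h0 : f.coeff 0 ≠ 0)
    (hf : Irreducible f) : Irreducible f.monicReciprocal := by
  have hm' := monic_monicReciprocal h0
  have hmm := hm.monicReciprocal_monicReciprocal h0
  have hc : f.monicReciprocal.coeff 0 ≠ 0 := by
    rw [hm.coeff_zero_monicReciprocal]; exact inv_ne_zero h0
  rw [hm'.irreducible_iff_natDegree]
  refine ⟨fun h => hf.natDegree_pos.ne' ?_, fun a b _ _ hab => ?_⟩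
  · rw [← natDegree_monicReciprocal h0, h, natDegree_one]
  · rw [← hab, mul_coeff_zero] at hc
    have hab' : f = a.monicReciprocal * b.monicReciprocal := by
      rw [← monicReciprocal_mul, hab, hmm]
    rw [← natDegree_monicReciprocal (left_ne_zero_of_mul hc),
      ← natDegree_monicReciprocal (right_ne_zero_of_mul hc)]
    rcases hf.isUnit_or_isUnit hab' with h | h
    · exact Or.inl (natDegree_eq_zero_of_isUnit h)
    · exact Or.inr (natDegree_eq_zero_of_isUnit h)

theorem monicReciprocal_X_pow_add_one {n : ℕ} (hn : n ≠ 0) :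
    (X ^ n + 1 : F[X]).monicReciprocal = X ^ n + 1 := by
  have hr : (X ^ n + 1 : F[X]).reverse = X ^ n + 1 := by
    have hX : (X ^ n : F[X]).reverse = 1 := by
      simpa using (reverse_mul_X_pow (1 : F[X]) n).trans (by simpa using reverse_C (1 : F))
    rw [← C_1, reverse_add_C, hX, natDegree_X_pow, C_1, one_mul, add_comm]
  rw [monicReciprocal, hr]
  simp [hn.symm]

/-- A self-reciprocal monic polynomial without self-reciprocal irreducible factors is of the form
`h* h`. -/
theorem Monic.exists_eq_monicReciprocal_mul {P : F[X]} (hP : P.Monic) (h0 : P.coeff 0 ≠ 0)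
    (hself : P.monicReciprocal = P)
    (hfac : ∀ f : F[X], f.Monic → Irreducible f → f ∣ P → f.monicReciprocal ≠ f) :
    ∃ h : F[X], h.Monic ∧ P = h.monicReciprocal * h := by
  induction hd : P.natDegree using Nat.strong_induction_on generalizing P with
  | _ d ih =>
  by_cases hu : IsUnit P
  · refine ⟨1, monic_one, ?_⟩
    have hr : (1 : F[X]).reverse = 1 := by simpa using reverse_C (1 : F)
    simp [monicReciprocal, hr, hP.eq_one_of_isUnit hu]
  obtain ⟨f, hfm, hfi, g, rfl⟩ := exists_monic_irreducible_factor P hu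
  have hf0 : f.coeff 0 ≠ 0 := left_ne_zero_of_mul (by rwa [mul_coeff_zero] at h0)
  have hfi' := hfm.irreducible_monicReciprocal hf0 hfi
  have hfm' := monic_monicReciprocal hf0
  have hdvd : f.monicReciprocal ∣ f * g := by
    rw [← hself]; exact monicReciprocal_dvd_monicReciprocal (dvd_mul_right _ _)
  have hndvd : ¬ f.monicReciprocal ∣ f := fun h =>
    hfac f hfm hfi (dvd_mul_right _ _)
      (eq_of_monic_of_associated hfm' hfm (hfi'.associated_of_dvd hfi h))
  obtain ⟨Q, rfl⟩ := (hfi'.prime.dvd_or_dvd hdvd).resolve_left hndvd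
  have hQm : Q.Monic := hfm'.of_mul_monic_left (hfm.of_mul_monic_left hP)
  have hQ0 : Q.coeff 0 ≠ 0 := by
    rw [mul_coeff_zero, mul_coeff_zero] at h0
    exact right_ne_zero_of_mul (right_ne_zero_of_mul h0)
  have hQself : Q.monicReciprocal = Q := by
    rw [monicReciprocal_mul, monicReciprocal_mul, hfm.monicReciprocal_monicReciprocal hf0,
      mul_left_comm] at hself
    exact mul_left_cancel₀ hfm'.ne_zero (mul_left_cancel₀ hfm.ne_zero hself)
  have hlt : Q.natDegree < d := by
    rw [← hd, hfm.natDegree_mul (hfm'.mul hQm), hfm'.natDegree_mul hQm]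
    have := hfi.natDegree_pos
    omega
  obtain ⟨h, hhm, hh⟩ := ih _ hlt hQm hQ0 hQself
    (fun k hk hki hkd => hfac k hk hki ((hkd.mul_left _).mul_left _)) rfl
  refine ⟨f * h, hfm.mul hhm, ?_⟩
  rw [monicReciprocal_mul]
  conv_lhs => rw [hh]
  ring

/-- Over a finite field with `q` elements, a root of a self-reciprocal irreducible polynomial is
inverted by some power of the Frobenius map. -/
theorem exists_pow_card_pow_add_one_eq_one [Finite F] {f : F[X]} (hf : Irreducible f)
    (hm : f.Monic) (h0 : f.coeff 0 ≠ 0) (hself : f.monicReciprocal = f) :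
    ∃ i : ℕ, AdjoinRoot.root f ^ (Nat.card F ^ i + 1) = 1 := by
  have := Fact.mk hf
  have := Fintype.ofFinite F
  have : Module.Finite F (AdjoinRoot f) := hm.finite_adjoinRoot
  have : Finite (AdjoinRoot f) := Module.finite_of_finite F
  have hα : AdjoinRoot.root f ≠ 0 := by
    intro h
    have := AdjoinRoot.eval₂_root f
    rw [h, eval₂_at_zero] at this
    exact h0 ((map_eq_zero _).1 this)
  have hroot : f.eval₂ (AdjoinRoot.of f) (AdjoinRoot.root f)⁻¹ = 0 := by
    let := invertibleOfNonzero hα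
    have := (eval₂_reverse_eq_zero_iff (AdjoinRoot.of f) (AdjoinRoot.root f) f).2
      (AdjoinRoot.eval₂_root f)
    rw [invOf_eq_inv] at this
    have hz : f.monicReciprocal.eval₂ (AdjoinRoot.of f) (AdjoinRoot.root f)⁻¹ = 0 := by
      rw [monicReciprocal, eval₂_mul, this, mul_zero]
    rwa [hself] at hz
  let φ : AdjoinRoot f →ₐ[F] AdjoinRoot f :=
    AdjoinRoot.liftAlgHom f (Algebra.ofId F _) (AdjoinRoot.root f)⁻¹ hroot
  obtain ⟨i, hi⟩ := (FiniteField.bijective_frobeniusAlgHom_pow F (AdjoinRoot f)).2 φ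
  refine ⟨i, ?_⟩
  have h1 : (FiniteField.frobeniusAlgHom F (AdjoinRoot f) ^ (i : ℕ)) (AdjoinRoot.root f) =
      (AdjoinRoot.root f)⁻¹ := by
    rw [show FiniteField.frobeniusAlgHom F (AdjoinRoot f) ^ (i : ℕ) = φ from hi]
    exact AdjoinRoot.liftAlgHom_root ..
  rw [AlgHom.coe_pow, FiniteField.coe_frobeniusAlgHom, pow_iterate] at h1
  beta_reduce at h1
  rw [Nat.card_eq_fintype_card, pow_succ, h1, inv_mul_cancel₀ hα]

end Field

end Polynomial

/-- If `2 ^ k` with `k ≥ 2` divides some `q ^ i + 1`, then it divides `q + 1`. -/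
theorem two_pow_dvd_add_one_of_dvd_pow_add_one {q i k : ℕ} (hk : 2 ≤ k)
    (h : 2 ^ k ∣ q ^ i + 1) : 2 ^ k ∣ q + 1 := by
  have h4 : 4 ∣ q ^ i + 1 := (pow_dvd_pow 2 hk).trans h
  have hi : Odd i := by
    by_contra hi
    obtain ⟨j, rfl⟩ := Nat.not_odd_iff_even.1 hi
    rw [pow_add] at h4
    have : q ^ j % 4 < 4 := Nat.mod_lt _ (by norm_num)
    have h5 : (q ^ j * q ^ j + 1) % 4 = 0 := Nat.mod_eq_zero_of_dvd h4
    rw [Nat.add_mod, Nat.mul_mod] at h5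
    interval_cases q ^ j % 4 <;> simp at h5
  have hqi : (q : ZMod (2 ^ k)) ^ i = -1 := by
    rw [← (ZMod.natCast_eq_zero_iff _ _)] at h
    push_cast at h
    exact eq_neg_of_add_eq_zero_left h
  have hpow : (-(q : ZMod (2 ^ k))) ^ i = 1 := by rw [hi.neg_pow, hqi, neg_neg]
  have hu : IsUnit (-(q : ZMod (2 ^ k))) := IsUnit.of_pow_eq_one hpow hi.pos.ne'
  obtain ⟨u, hu⟩ := hu
  have hui : u ^ i = 1 := by ext; simpa [hu] using hpow
  have hut : u ^ 2 ^ (k - 1) = 1 := by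
    have := ZMod.pow_totient u
    rwa [Nat.totient_prime_pow Nat.prime_two (by omega), Nat.mul_one] at this
  have hu1 : u = 1 := by
    have := pow_gcd_eq_one.2 ⟨hui, hut⟩
    rwa [(hi.coprime_two_right.pow_right _ : Nat.gcd i _ = 1), pow_one] at this
  rw [← ZMod.natCast_eq_zero_iff]
  push_cast
  rw [hu1, Units.val_one] at hu
  rw [hu, add_neg_cancel]

theorem two_pow_succ_dvd_of_pow_eq_one {K : Type*} [Field K] (h2 : (2 : K) ≠ 0) {a : K}
    {ν s N : ℕ} (hs : a ^ (2 ^ ν * s) = -1) (hN : a ^ N = 1) : 2 ^ (ν + 1) ∣ N := by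
  have hne : (-1 : K) ≠ 1 := fun h => h2 (by linear_combination -h)
  have hord : orderOf (a ^ s) = 2 ^ (ν + 1) := by
    refine orderOf_eq_prime_pow ?_ ?_
    · rwa [← pow_mul, mul_comm, hs]
    · rw [← pow_mul, mul_comm, pow_succ, mul_right_comm, pow_mul, hs, neg_one_sq]
  rw [← hord]
  exact orderOf_dvd_of_pow_eq_one (by rw [pow_right_comm, hN, one_pow])

/-- If `2 ^ (ν + 1)` divides `q + 1`, then a primitive `2 ^ (ν + 1)`-th root of unity has odd
multiplicity in `X ^ n + 1`, but even multiplicity in any `h* h`. -/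
theorem X_pow_add_one_ne_monicReciprocal_mul {F : Type*} [Field F] [Finite F] (p : ℕ)
    [Fact p.Prime] [CharP F p] (hp : Odd p) {ν s : ℕ} (r : ℕ) (hs : Odd s) (hps : ¬ p ∣ s)
    (hdvd : 2 ^ (ν + 1) ∣ Nat.card F + 1) (h : F[X]) :
    X ^ (2 ^ ν * p ^ r * s) + 1 ≠ h.monicReciprocal * h := by
  intro heq
  have := Fintype.ofFinite F
  let K := AlgebraicClosure F
  have : CharP K p := charP_of_injective_algebraMap (algebraMap F K).injective p
  obtain ⟨a, ha⟩ := IsAlgClosed.exists_pow_nat_eq (-1 : K) (pow_pos two_pos ν)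
  have ha0 : a ≠ 0 := by
    rintro rfl
    simp at ha
  have haq : a ^ Nat.card F = a⁻¹ := by
    obtain ⟨c, hc⟩ := hdvd
    refine eq_inv_of_mul_eq_one_left ?_
    rw [← pow_succ, hc, pow_succ, mul_assoc, pow_mul, ha, pow_mul, neg_one_sq, one_pow]
  have hpm : ¬ p ∣ 2 ^ ν * s := by
    intro hd
    rcases (Fact.out : p.Prime).dvd_mul.1 hd with hd | hd
    · have := (Nat.prime_dvd_prime_iff_eq Fact.out Nat.prime_two).1
        ((Fact.out : p.Prime).dvd_of_dvd_pow hd)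
      subst this
      exact absurd hp (by decide)
    · exact hps hd
  have hmult := rootMultiplicity_X_pow_mul_char_pow_add_one p hpm r
    (a := a) (by rw [pow_mul, ha, hs.neg_one_pow])
  have hne : (X ^ (2 ^ ν * p ^ r * s) + 1 : F[X]) ≠ 0 := by
    refine (monic_X_pow_add_C 1 ?_).ne_zero
    exact mul_ne_zero (by positivity [(Fact.out : p.Prime).pos]) hs.pos.ne'
  have h0 : h.coeff 0 ≠ 0 := by
    intro h0
    rw [heq, monicReciprocal, h0] at hne
    simp at hne
  have hinj := (algebraMap F K).injective
  set H := h.map (algebraMap F K) with hH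
  have hH0 : H.coeff 0 ≠ 0 := by rw [hH, coeff_map]; exact (_root_.map_ne_zero _).2 h0
  have heqK : (X ^ (2 ^ ν * s * p ^ r) + 1 : K[X]) =
      C (H.coeff 0)⁻¹ * H.reverse * H := by
    have := congrArg (Polynomial.map (algebraMap F K)) heq
    rw [mul_right_comm (2 ^ ν)] at this
    simpa [monicReciprocal, reverse_map_of_injective hinj, hH] using this
  have hfrob : H.rootMultiplicity a⁻¹ = H.rootMultiplicity a := by
    let φ := FiniteField.frobeniusAlgHom F K
    have hφ := eq_rootMultiplicity_map (p := H) (f := (φ : K →+* K)) φ.toRingHom.injective a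
    rw [hH, Polynomial.map_map, AlgHom.comp_algebraMap] at hφ
    rw [hφ]
    congr 1
    rw [← haq, Nat.card_eq_fintype_card]
    rfl
  have hrev : H.reverse.rootMultiplicity a = H.rootMultiplicity a := by
    rw [← hfrob, ← rootMultiplicity_inv_reverse hH0 (inv_ne_zero ha0), inv_inv]
  have hHne : H ≠ 0 := by
    intro h
    simp [h] at hH0
  rw [heqK, mul_assoc, rootMultiplicity_mul, rootMultiplicity_mul, rootMultiplicity_C, hrev,
    zero_add] at hmult
  · exact Nat.not_even_iff_odd.2 (hp.pow (n := r)) ⟨_, hmult.symm⟩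
  · exact mul_ne_zero (by simpa using hHne) hHne
  · exact mul_ne_zero (by simpa using hH0) (mul_ne_zero (by simpa using hHne) hHne)

/-- Let `p` be an odd prime, `F` the field with `p^l` elements, `ν ≥ 1`, `r ≥ 0`,
`n′` odd with `p ∤ n′`, and `n = 2^ν·p^r·n′`. A Euclidean self-dual negacyclic code of
length `n` over `F` exists (i.e. `X^n + 1 = h*·h` for some monic `h`) if and only if
`2^(ν+1) ∤ p^l + 1`. -/
theorem euclidean_selfDual_negacyclic_exists_iff
    (p : ℕ) [hp : Fact p.Prime] (hodd : Odd p) (l : ℕ) (hl : 0 < l)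
    (ν r n' : ℕ) (hν : 1 ≤ ν) (hn' : 0 < n') (hn'o : Odd n') (hpn' : ¬ p ∣ n') :
    (∃ h : Polynomial (GaloisField p l), h.Monic ∧
        (X : Polynomial (GaloisField p l)) ^ (2 ^ ν * p ^ r * n') + 1 =
          (Polynomial.C (h.coeff 0)⁻¹ * h.reverse) * h) ↔
      ¬ 2 ^ (ν + 1) ∣ p ^ l + 1 := by
  have hcard : Nat.card (GaloisField p l) = p ^ l := GaloisField.card p l hl.ne'
  constructor
  · rintro ⟨h, -, heq⟩ hdvd
    exact X_pow_add_one_ne_monicReciprocal_mul p hodd r hn'o hpn' (hcard ▸ hdvd) h heq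
  · intro hnd
    have hn : 2 ^ ν * p ^ r * n' ≠ 0 := by
      have := hp.out.pos
      positivity
    have h0 : (X ^ (2 ^ ν * p ^ r * n') + 1 : (GaloisField p l)[X]).coeff 0 ≠ 0 := by
      simp [coeff_X_pow, hn.symm]
    refine Monic.exists_eq_monicReciprocal_mul (monic_X_pow_add_C 1 hn) h0
      (monicReciprocal_X_pow_add_one hn) ?_
    rintro f hfm hfi ⟨g, hg⟩ hself
    have hf0 : f.coeff 0 ≠ 0 := left_ne_zero_of_mul (by rwa [hg, mul_coeff_zero] at h0)
    obtain ⟨i, hi⟩ := exists_pow_card_pow_add_one_eq_one hfi hfm hf0 hself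
    have := Fact.mk hfi
    have h2 : (2 : AdjoinRoot f) ≠ 0 := by
      have : CharP (AdjoinRoot f) p :=
        charP_of_injective_algebraMap (algebraMap (GaloisField p l) _).injective p
      refine Ring.two_ne_zero ?_
      rw [ringChar.eq (AdjoinRoot f) p]
      rintro rfl
      exact absurd hodd (by decide)
    have hroot : AdjoinRoot.root f ^ (2 ^ ν * (p ^ r * n')) = -1 := by
      have := congrArg (AdjoinRoot.mk f) hg
      rw [map_mul, AdjoinRoot.mk_self, zero_mul] at this
      rw [← mul_assoc]
      exact eq_neg_of_add_eq_zero_left (by simpa using this)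
    have := two_pow_succ_dvd_of_pow_eq_one h2 hroot hi
    rw [hcard] at this
    exact hnd (two_pow_dvd_add_one_of_dvd_pow_add_one (by omega) this)
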